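/- arXiv:2204.14150 — 2 statements merged into one kernel-verified Lean document; each statement's English description precedes it below -/
import Mathlib

section
/- Let G be a finite simple connected graph, let u and v be vertices of G, and let 𝔅 be the set of blocks of G. For a block B, let deq_B(x,y) denote the number of edges of B that are (x,y)-distance-equal (with distances measured in G), and let u_B and v_B denote the vertices of B closest (in G) to u and to v, respectively. Then deq_B(u,v) = deq_B(u_B, v_B) for every block B, and consequently deq_G(u,v) = Σ_{B ∈ 𝔅} deq_B(u_B, v_B). -/
open Finset

attribute [local instance] Classical.propDecidable

variable {V : Type*}

/-- `n_G(s,t)`: the number of vertices strictly closer to `s` than to `t`. -/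
noncomputable def closerCount [Fintype V] (G : SimpleGraph V) (s t : V) : ℕ :=
  (Finset.univ.filter fun w => G.dist w s < G.dist w t).card

/-- `o_G(s,t)`: the number of vertices equidistant from `s` and `t`. -/
noncomputable def equidistCount [Fintype V] (G : SimpleGraph V) (s t : V) : ℕ :=
  (Finset.univ.filter fun w => G.dist w s = G.dist w t).card

lemma equidistCount_comm [Fintype V] (G : SimpleGraph V) (s t : V) :
    equidistCount G s t = equidistCount G t s := by
  unfold equidistCount
  congr 1
  ext w
  simp only [Finset.mem_filter]
  exact and_congr_right fun _ => ⟨Eq.symm, Eq.symm⟩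

/-- `o_G` as a function on unordered pairs (edges). -/
noncomputable def equidistSym2 [Fintype V] (G : SimpleGraph V) : Sym2 V → ℕ :=
  Sym2.lift ⟨fun s t => equidistCount G s t, fun s t => equidistCount_comm G s t⟩

/-- The Wiener index: the sum of distances over unordered pairs of vertices. -/
noncomputable def wiener [Fintype V] (G : SimpleGraph V) : ℕ :=
  ∑ p : Sym2 V, Sym2.lift ⟨fun u v => G.dist u v, fun _ _ => G.dist_comm⟩ p

/-- The Szeged index `Sz(G) = Σ_{{s,t} ∈ E(G)} n_G(s,t) n_G(t,s)`. -/
noncomputable def szeged [Fintype V] (G : SimpleGraph V) : ℕ :=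
  ∑ e ∈ G.edgeFinset,
    Sym2.lift ⟨fun s t => closerCount G s t * closerCount G t s,
      fun _ _ => Nat.mul_comm _ _⟩ e

/-- The revised Szeged index
`Sz*(G) = Σ_{{s,t} ∈ E(G)} (n_G(s,t) + o_G(s,t)/2) (n_G(t,s) + o_G(t,s)/2)`. -/
noncomputable def revisedSzeged [Fintype V] (G : SimpleGraph V) : ℚ :=
  ∑ e ∈ G.edgeFinset,
    Sym2.lift ⟨fun s t =>
      ((closerCount G s t : ℚ) + (equidistCount G s t : ℚ) / 2) *
        ((closerCount G t s : ℚ) + (equidistCount G t s : ℚ) / 2),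
      fun _ _ => mul_comm _ _⟩ e

/-- An edge `{s,t}` is `(u,v)`-distance-disparate if `d(u,s) < d(u,t)` and `d(v,s) > d(v,t)`,
or `d(u,s) > d(u,t)` and `d(v,s) < d(v,t)`. -/
def IsDisparate (G : SimpleGraph V) (u v : V) : Sym2 V → Prop :=
  Sym2.lift ⟨fun s t =>
    (G.dist u s < G.dist u t ∧ G.dist v t < G.dist v s) ∨
      (G.dist u t < G.dist u s ∧ G.dist v s < G.dist v t),
    fun _ _ => propext or_comm⟩

/-- `dis_G(u,v)`: the number of `(u,v)`-distance-disparate edges of `G`. -/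
noncomputable def disCount [Fintype V] (G : SimpleGraph V) (u v : V) : ℕ :=
  (G.edgeFinset.filter (IsDisparate G u v)).card

/-- An edge `{s,t}` is `(u,v)`-distance-equal if `d(u,s) = d(u,t)` and `d(v,s) = d(v,t)`. -/
def IsDistEqual (G : SimpleGraph V) (u v : V) : Sym2 V → Prop :=
  Sym2.lift ⟨fun s t => G.dist u s = G.dist u t ∧ G.dist v s = G.dist v t,
    fun _ _ => propext ⟨fun h => ⟨h.1.symm, h.2.symm⟩, fun h => ⟨h.1.symm, h.2.symm⟩⟩⟩

/-- `deq_G(u,v)`: the number of `(u,v)`-distance-equal edges of `G`. -/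
noncomputable def deqCount [Fintype V] (G : SimpleGraph V) (u v : V) : ℕ :=
  (G.edgeFinset.filter (IsDistEqual G u v)).card

/-- A subgraph without cut vertices: it is connected and deleting any single vertex leaves
it preconnected. -/
def NoCutVertexSub (G : SimpleGraph V) (H : G.Subgraph) : Prop :=
  H.Connected ∧ ∀ v : V, ((H.deleteVerts {v}).coe.Preconnected)

/-- A block of `G`: a maximal connected subgraph without a cut vertex. -/
def IsBlock (G : SimpleGraph V) (B : G.Subgraph) : Prop :=
  NoCutVertexSub G B ∧ ∀ H : G.Subgraph, NoCutVertexSub G H → B ≤ H → B = H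

/-- The subgraph `B` is a single edge together with its two endpoints. -/
def IsEdgeBlock (G : SimpleGraph V) (B : G.Subgraph) : Prop :=
  ∃ (u v : V) (h : G.Adj u v), B = G.subgraphOfAdj h

/-- The subgraph `B` is a cycle (of some length `n ≥ 3`). -/
def IsCycleBlock (G : SimpleGraph V) (B : G.Subgraph) : Prop :=
  ∃ n : ℕ, 3 ≤ n ∧ Nonempty (B.coe ≃g SimpleGraph.cycleGraph n)

/-- A cactus graph: a connected graph in which every block is an edge or a cycle. -/
def IsCactus (G : SimpleGraph V) : Prop :=
  G.Connected ∧ ∀ B : G.Subgraph, IsBlock G B → IsEdgeBlock G B ∨ IsCycleBlock G B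
/-- `deq_B(x,y)`: the number of `(x,y)`-distance-equal edges (distances in `G`) lying in the
subgraph `B`. -/
noncomputable def deqCountIn [Fintype V] (G : SimpleGraph V) (B : G.Subgraph)
    (u v : V) : ℕ :=
  {e ∈ B.edgeSet | IsDistEqual G u v e}.ncard

/-!
A path whose ends lie in a block stays inside the block, because attaching it creates no cut vertex.
Hence every walk from `u` into a block `B` passes through the vertex `g` of `B` nearest to `u`:
a walk avoiding `g`, preceded by the reverse of a geodesic from `u` to `g`, would give a path in `B`
whose first edge lies on the geodesic, that is, a vertex of `B` nearer to `u` than `g`.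
So `d(u, s) = d(u, g) + d(g, s)` for `s ∈ B`, and replacing `u` by `g` shifts all distances to `B`
by a constant. Distance-equal edges of `B` are therefore the same for `(u, v)` and `(u_B, v_B)`, and
the edge sets of the blocks partition the edges of `G`.
-/

section

open SimpleGraph

variable {G : SimpleGraph V} {B C H K : G.Subgraph} {a b g s t u v x y : V}

lemma le_deleteVerts {S : Set V} (hKH : K ≤ H) (hKS : Disjoint K.verts S) :
    K ≤ H.deleteVerts S := by
  refine ⟨fun x hx => ⟨hKH.1 hx, hKS.notMem_of_mem_left hx⟩, fun x y hxy => ?_⟩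
  rw [Subgraph.deleteVerts_adj]
  exact ⟨hKH.1 hxy.fst_mem, hKS.notMem_of_mem_left hxy.fst_mem, hKH.1 hxy.snd_mem,
    hKS.notMem_of_mem_left hxy.snd_mem, hKH.2 hxy⟩

lemma preconnected_of_forall_exists_walk (hK : K.Preconnected) (hKH : K ≤ H)
    (hwalk : ∀ x ∈ H.verts, ∃ y ∈ K.verts, ∃ p : G.Walk x y, p.toSubgraph ≤ H) :
    H.Preconnected := by
  rw [Subgraph.preconnected_iff_forall_exists_walk_subgraph] at hK ⊢
  intro x y hx hy
  obtain ⟨x', hx', p, hp⟩ := hwalk x hx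
  obtain ⟨y', hy', q, hq⟩ := hwalk y hy
  obtain ⟨r, hr⟩ := hK hx' hy'
  refine ⟨p.append (r.append q.reverse), ?_⟩
  simp only [Walk.toSubgraph_append, Walk.toSubgraph_reverse, sup_le_iff]
  exact ⟨hp, hr.trans hKH, hq⟩

lemma exists_walk_notMem_support_of_isPath {p : G.Walk s t} (hp : p.IsPath) (hx : x ∈ p.support)
    (hxv : x ≠ v) :
    (∃ q : G.Walk x s, q.toSubgraph ≤ p.toSubgraph ∧ v ∉ q.support) ∨
      ∃ q : G.Walk x t, q.toSubgraph ≤ p.toSubgraph ∧ v ∉ q.support := by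
  obtain ⟨q, r, rfl⟩ := Walk.mem_support_iff_exists_append.mp hx
  simp only [Walk.toSubgraph_append]
  by_cases hvq : v ∈ q.support
  · exact .inr ⟨r, le_sup_right, fun hvr =>
      hp.ne_of_mem_support_of_append hxv.symm hvq hvr rfl⟩
  · refine .inl ⟨q.reverse, ?_, ?_⟩
    · rw [Walk.toSubgraph_reverse]
      exact le_sup_left
    · rwa [Walk.support_reverse, List.mem_reverse]

lemma dist_eq_add_of_mem_support {p : G.Walk u s} (hp : p.length = G.dist u s)
    (hg : g ∈ p.support) : G.dist u s = G.dist u g + G.dist g s := by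
  obtain ⟨q, r, rfl⟩ := Walk.mem_support_iff_exists_append.mp hg
  rw [← hp, Walk.length_append,
    length_eq_dist_of_subwalk hp (Walk.isSubwalk_of_append_left rfl),
    length_eq_dist_of_subwalk hp (Walk.isSubwalk_of_append_right rfl)]

lemma NoCutVertexSub.exists_walk (hH : NoCutVertexSub G H) (hx : x ∈ H.verts) (hy : y ∈ H.verts)
    (hxv : x ≠ v) (hyv : y ≠ v) : ∃ p : G.Walk x y, p.toSubgraph ≤ H ∧ v ∉ p.support := by
  obtain ⟨p, hp⟩ := (H.deleteVerts {v}).preconnected_iff_forall_exists_walk_subgraph.mp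
    ⟨hH.2 v⟩ ⟨hx, hxv⟩ ⟨hy, hyv⟩
  exact ⟨p, hp.trans Subgraph.deleteVerts_le,
    fun hv => (hp.1 (p.mem_verts_toSubgraph.mpr hv)).2 rfl⟩

lemma NoCutVertexSub.sup (hB : NoCutVertexSub G B) (hH : H.Preconnected)
    (hBH : (B ⊓ H).verts.Nonempty)
    (hwalk : ∀ v, ∀ x ∈ H.verts, x ≠ v →
      ∃ y ∈ B.verts, ∃ p : G.Walk x y, p.toSubgraph ≤ H ∧ v ∉ p.support) :
    NoCutVertexSub G (B ⊔ H) := by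
  refine ⟨Subgraph.connected_sup hB.1.preconnected hH hBH, fun v => ?_⟩
  suffices ((B ⊔ H).deleteVerts {v}).Preconnected from this.coe
  refine preconnected_of_forall_exists_walk (K := B.deleteVerts {v}) ⟨hB.2 v⟩
    (Subgraph.deleteVerts_mono le_sup_left) fun x ⟨hx, hxv⟩ => ?_
  rcases hx with hxB | hxH
  · refine ⟨x, ⟨hxB, hxv⟩, .nil, ?_⟩
    exact (singletonSubgraph_le_iff _ _).mpr ⟨.inl hxB, hxv⟩
  · obtain ⟨y, hyB, p, hpH, hvp⟩ := hwalk v x hxH hxv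
    have hyv : y ≠ v := fun h => hvp (h ▸ p.end_mem_support)
    exact ⟨y, ⟨hyB, hyv⟩, p, le_deleteVerts (hpH.trans le_sup_right)
      (Set.disjoint_singleton_right.mpr (mt p.mem_verts_toSubgraph.mp hvp))⟩

lemma NoCutVertexSub.sup_of_ne (hB : NoCutVertexSub G B) (hC : NoCutVertexSub G C) (hab : a ≠ b)
    (ha : a ∈ (B ⊓ C).verts) (hb : b ∈ (B ⊓ C).verts) : NoCutVertexSub G (B ⊔ C) := by
  refine hB.sup hC.1.preconnected ⟨a, ha⟩ fun v x hx hxv => ?_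
  obtain ⟨c, hc, hcv⟩ : ∃ c ∈ (B ⊓ C).verts, c ≠ v := by
    rcases eq_or_ne a v with rfl | hav
    · exact ⟨b, hb, hab.symm⟩
    · exact ⟨a, ha, hav⟩
  exact ⟨c, hc.1, hC.exists_walk hx hc.2 hxv hcv⟩

lemma NoCutVertexSub.sup_toSubgraph (hB : NoCutVertexSub G B) (hs : s ∈ B.verts) (ht : t ∈ B.verts)
    {p : G.Walk s t} (hp : p.IsPath) : NoCutVertexSub G (B ⊔ p.toSubgraph) := by
  refine hB.sup p.toSubgraph_connected.preconnected ⟨s, hs, p.start_mem_verts_toSubgraph⟩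
    fun v x hx hxv => ?_
  rcases exists_walk_notMem_support_of_isPath hp (p.mem_verts_toSubgraph.mp hx) hxv with hq | hq
  · exact ⟨s, hs, hq⟩
  · exact ⟨t, ht, hq⟩

lemma noCutVertexSub_subgraphOfAdj (h : G.Adj a b) : NoCutVertexSub G (G.subgraphOfAdj h) := by
  refine ⟨Subgraph.subgraphOfAdj_connected h, fun v ⟨x, hx, hxv⟩ ⟨y, hy, hyv⟩ => ?_⟩
  rcases eq_or_ne x y with rfl | hxy
  · rfl
  · refine Adj.reachable (Subgraph.deleteVerts_adj.mpr
      ⟨hx, hxv, hy, hyv, ?_⟩)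
    simp only [subgraphOfAdj_verts, Set.mem_insert_iff, Set.mem_singleton_iff] at hx hy
    simp only [subgraphOfAdj_adj, Sym2.eq_iff]
    grind

lemma IsBlock.le_of_noCutVertexSub_sup (hB : IsBlock G B) (hBH : NoCutVertexSub G (B ⊔ H)) :
    H ≤ B :=
  le_sup_right.trans (hB.2 _ hBH le_sup_left).ge

lemma IsBlock.toSubgraph_le (hB : IsBlock G B) (hs : s ∈ B.verts) (ht : t ∈ B.verts)
    {p : G.Walk s t} (hp : p.IsPath) : p.toSubgraph ≤ B :=
  hB.le_of_noCutVertexSub_sup (hB.1.sup_toSubgraph hs ht hp)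

lemma IsBlock.eq_of_ne (hB : IsBlock G B) (hC : IsBlock G C) (hab : a ≠ b)
    (ha : a ∈ (B ⊓ C).verts) (hb : b ∈ (B ⊓ C).verts) : B = C :=
  le_antisymm (hC.le_of_noCutVertexSub_sup (hC.1.sup_of_ne hB.1 hab ha.symm hb.symm))
    (hB.le_of_noCutVertexSub_sup (hB.1.sup_of_ne hC.1 hab ha hb))

lemma IsBlock.disjoint_edgeSet (hB : IsBlock G B) (hC : IsBlock G C) (hBC : B ≠ C) :
    Disjoint B.edgeSet C.edgeSet := by
  refine Set.disjoint_left.mpr fun e => e.ind fun a b (hab : B.Adj a b) (hab' : C.Adj a b) => ?_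
  exact hBC (hB.eq_of_ne hC hab.ne ⟨hab.fst_mem, hab'.fst_mem⟩ ⟨hab.snd_mem, hab'.snd_mem⟩)

lemma exists_isBlock_adj [Finite V] (h : G.Adj a b) :
    ∃ B : G.Subgraph, IsBlock G B ∧ B.Adj a b := by
  obtain ⟨B, hle, hB⟩ := Finite.exists_le_maximal (noCutVertexSub_subgraphOfAdj h)
  exact ⟨B, ⟨hB.prop, fun _ hH hBH => hB.eq_of_le hH hBH⟩,
    (subgraphOfAdj_le_iff h B).mp hle⟩

lemma iUnion_edgeSet_of_isBlock [Finite V] (G : SimpleGraph V) :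
    ⋃ B ∈ {B : G.Subgraph | IsBlock G B}, B.edgeSet = G.edgeSet := by
  refine (Set.iUnion₂_subset fun B _ => B.edgeSet_subset).antisymm fun e => e.ind fun a b hab => ?_
  obtain ⟨B, hB, habB⟩ := exists_isBlock_adj hab
  exact Set.mem_biUnion hB habB

theorem deqCount_eq_sum_deqCountIn [Fintype V] {𝔅 : Finset G.Subgraph}
    (h𝔅 : ∀ B : G.Subgraph, B ∈ 𝔅 ↔ IsBlock G B) (u v : V) :
    deqCount G u v = ∑ B ∈ 𝔅, deqCountIn G B u v := by
  have hunion : {e ∈ G.edgeSet | IsDistEqual G u v e} =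
      ⋃ B ∈ (𝔅 : Set G.Subgraph), {e ∈ B.edgeSet | IsDistEqual G u v e} := by
    ext e
    simp only [← iUnion_edgeSet_of_isBlock, Set.mem_iUnion, Set.mem_ofPred_eq, Finset.mem_coe, h𝔅,
      exists_prop, ← and_assoc, exists_and_right]
  have hdisj : (𝔅 : Set G.Subgraph).PairwiseDisjoint
      fun B => {e ∈ B.edgeSet | IsDistEqual G u v e} := fun B hB C hC hBC =>
    (((h𝔅 B).mp hB).disjoint_edgeSet ((h𝔅 C).mp hC) hBC).mono (Set.sep_subset _ _)
      (Set.sep_subset _ _)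
  calc deqCount G u v
      = {e ∈ G.edgeSet | IsDistEqual G u v e}.ncard := by
        rw [deqCount, ← Set.ncard_coe_finset, Finset.coe_filter]
        simp only [mem_edgeFinset]
    _ = ∑ᶠ B ∈ (𝔅 : Set G.Subgraph), deqCountIn G B u v := by
        rw [hunion, 𝔅.finite_toSet.ncard_biUnion (fun _ _ => Set.toFinite _) hdisj]
        rfl
    _ = ∑ B ∈ 𝔅, deqCountIn G B u v := finsum_mem_coe_finset _ _

/-- `g` is a vertex of `S` at minimum distance from `u`; when `S` is the vertex set of a block `B`,
this is the vertex `u_B`. -/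
def IsNearest (G : SimpleGraph V) (S : Set V) (u g : V) : Prop :=
  g ∈ S ∧ ∀ x ∈ S, G.dist u g ≤ G.dist u x

lemma IsNearest.eq_of_mem_support {S : Set V} (hg : IsNearest G S u g) {p : G.Walk u g}
    (hp : p.length = G.dist u g) (hxp : x ∈ p.support) (hxS : x ∈ S) : x = g := by
  have hxg : G.Reachable x g := (p.dropUntil x hxp).reachable
  have hadd : G.dist u g = G.dist u x + G.dist x g := dist_eq_add_of_mem_support hp hxp
  have hle : G.dist u g ≤ G.dist u x := hg.2 x hxS
  exact hxg.dist_eq_zero_iff.mp (by lia)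

lemma IsBlock.mem_support_of_isNearest (hB : IsBlock G B) (hg : IsNearest G B.verts u g)
    (hs : s ∈ B.verts) (q : G.Walk u s) : g ∈ q.support := by
  by_contra hgq
  obtain ⟨r, -⟩ := B.preconnected_iff_forall_exists_walk_subgraph.mp hB.1.1.preconnected hs hg.1
  obtain ⟨p, hp⟩ := (q.append r).reachable.exists_walk_length_eq_dist
  let c := (p.reverse.append q).bypass
  have hcB : c.toSubgraph ≤ B := hB.toSubgraph_le hg.1 hs (Walk.bypass_isPath _)
  have hc : ¬c.Nil := fun h => hgq (h.eq ▸ q.end_mem_support)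
  have hsnd : c.snd ∈ B.verts := (hcB.2 (c.toSubgraph_adj_snd hc)).snd_mem
  have hedge : s(g, c.snd) ∈ p.edges ∨ s(g, c.snd) ∈ q.edges := by
    simpa using Walk.edges_bypass_subset_edges _ (c.mk_start_snd_mem_edges hc)
  rcases hedge with hedge | hedge
  · exact (c.adj_snd hc).ne' (hg.eq_of_mem_support hp (p.snd_mem_support_of_mem_edges hedge) hsnd)
  · exact hgq (q.fst_mem_support_of_mem_edges hedge)

lemma IsBlock.dist_eq_add (hB : IsBlock G B) (hg : IsNearest G B.verts u g) (hs : s ∈ B.verts)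
    (hus : G.Reachable u s) : G.dist u s = G.dist u g + G.dist g s := by
  obtain ⟨p, hp⟩ := hus.exists_walk_length_eq_dist
  exact dist_eq_add_of_mem_support hp (hB.mem_support_of_isNearest hg hs p)

lemma IsBlock.dist_eq_dist_iff (hG : G.Connected) (hB : IsBlock G B) (hg : IsNearest G B.verts u g)
    (hs : s ∈ B.verts) (ht : t ∈ B.verts) :
    G.dist u s = G.dist u t ↔ G.dist g s = G.dist g t := by
  rw [hB.dist_eq_add hg hs (hG u s), hB.dist_eq_add hg ht (hG u t), Nat.add_left_cancel_iff]

lemma IsBlock.isDistEqual_iff (hG : G.Connected) (hB : IsBlock G B)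
    (ha : IsNearest G B.verts u a) (hb : IsNearest G B.verts v b) {e : Sym2 V}
    (he : e ∈ B.edgeSet) : IsDistEqual G u v e ↔ IsDistEqual G a b e := by
  induction e with
  | _ s t =>
    have hst : B.Adj s t := he
    exact and_congr (hB.dist_eq_dist_iff hG ha hst.fst_mem hst.snd_mem)
      (hB.dist_eq_dist_iff hG hb hst.fst_mem hst.snd_mem)

theorem IsBlock.deqCountIn_eq [Fintype V] (hG : G.Connected) (hB : IsBlock G B)
    (ha : IsNearest G B.verts u a) (hb : IsNearest G B.verts v b) :
    deqCountIn G B u v = deqCountIn G B a b :=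
  congrArg Set.ncard (Set.sep_ext_iff.mpr fun _ he => hB.isDistEqual_iff hG ha hb he)

end

/-- **Lemma (distance-equal edges split over blocks).**
For vertices `u, v` of a finite simple connected graph `G` with set of blocks `𝔅`, where
`uB B` and `vB B` denote the vertices of the block `B` closest in `G` to `u` and to `v`
respectively, `deq_B(u,v) = deq_B(u_B, v_B)` for every block `B`, and consequently
`deq_G(u,v) = Σ_{B ∈ 𝔅} deq_B(u_B, v_B)`. -/
theorem deqCount_eq_sum_blocks [Fintype V] (G : SimpleGraph V) (hG : G.Connected) (u v : V)
    (𝔅 : Finset G.Subgraph) (h𝔅 : ∀ B : G.Subgraph, B ∈ 𝔅 ↔ IsBlock G B)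
    (uB vB : G.Subgraph → V)
    (huB : ∀ B ∈ 𝔅, uB B ∈ B.verts ∧ ∀ x ∈ B.verts, G.dist u (uB B) ≤ G.dist u x)
    (hvB : ∀ B ∈ 𝔅, vB B ∈ B.verts ∧ ∀ x ∈ B.verts, G.dist v (vB B) ≤ G.dist v x) :
    (∀ B ∈ 𝔅, deqCountIn G B u v = deqCountIn G B (uB B) (vB B)) ∧
      deqCount G u v = ∑ B ∈ 𝔅, deqCountIn G B (uB B) (vB B) := by
  have hblock : ∀ B ∈ 𝔅, deqCountIn G B u v = deqCountIn G B (uB B) (vB B) := fun B hB =>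
    ((h𝔅 B).mp hB).deqCountIn_eq hG (huB B hB) (hvB B hB)
  exact ⟨hblock, (deqCount_eq_sum_deqCountIn h𝔅 u v).trans (Finset.sum_congr rfl hblock)⟩
end

section
/- Let G be a bipartite cactus graph. Then Sz*(G) ≤ 2·W(G). -/
open Finset

attribute [local instance] Classical.propDecidable

variable {V : Type*}

/-!
Both sides count ordered pairs of vertices: `2 W(G)` is the sum of the distances `d(u,v)`, and
`2 Sz(G)` is the sum of the numbers `dis(u,v)` of disparate edges. In a bipartite graph no vertex
is equidistant from the ends of an edge, so `Sz*(G) = Sz(G)`, and `dis` satisfies the triangle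
inequality. It therefore suffices that `dis(x,y) ≤ 2` for every edge `xy`. An `(x,y)`-disparate
edge `st` other than `xy`, with `s` on the side of `x`, closes up with `xy` and two geodesics, from
`x` to `s` and from `t` to `y`, to a cycle. In a cactus every cycle is a block, so only one cycle
passes through `xy`; there `s` is the vertex farthest from `x` among those closer to `x` than to
`y`, so `s` is unique, and likewise `t`.
-/

section Subgraphs

variable {G : SimpleGraph V} {H K : G.Subgraph}

lemma NoCutVertexSub.sup_s12 (hH : NoCutVertexSub G H) (hK : NoCutVertexSub G K)
    (hHK : (H ⊓ K).verts.Nontrivial) : NoCutVertexSub G (H ⊔ K) := by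
  refine ⟨SimpleGraph.Subgraph.connected_sup hH.1.preconnected hK.1.preconnected hHK.nonempty,
    fun v => ?_⟩
  obtain ⟨w, hw, hwv⟩ := hHK.exists_ne v
  have hdel : (H.deleteVerts {v} ⊔ K.deleteVerts {v}).Connected :=
    SimpleGraph.Subgraph.connected_sup ⟨hH.2 v⟩ ⟨hK.2 v⟩ ⟨w, ⟨hw.1, hwv⟩, hw.2, hwv⟩
  have hle : H.deleteVerts {v} ⊔ K.deleteVerts {v} ≤ (H ⊔ K).deleteVerts {v} :=
    sup_le (SimpleGraph.Subgraph.deleteVerts_mono le_sup_left)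
      (SimpleGraph.Subgraph.deleteVerts_mono le_sup_right)
  exact (hdel.mono hle Set.union_sdiff_distrib.symm).preconnected.coe

lemma NoCutVertexSub.exists_isBlock_ge [Finite V] (hH : NoCutVertexSub G H) :
    ∃ B : G.Subgraph, IsBlock G B ∧ H ≤ B := by
  obtain ⟨B, hHB, hB⟩ :=
    (Set.toFinite {K : G.Subgraph | NoCutVertexSub G K}).exists_le_maximal hH
  exact ⟨B, ⟨hB.1, fun K hK hBK => hBK.antisymm (hB.2 hK hBK)⟩, hHB⟩

lemma IsBlock.eq_of_nontrivial_inf (hH : IsBlock G H) (hK : IsBlock G K)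
    (hHK : (H ⊓ K).verts.Nontrivial) : H = K :=
  have hsup := hH.1.sup_s12 hK.1 hHK
  (hH.2 _ hsup le_sup_left).trans (hK.2 _ hsup le_sup_right).symm

lemma subgraph_eq_of_le_of_neighborSet_subset (hHK : H ≤ K) (hne : H.verts.Nonempty)
    (hK : K.Preconnected) (hnbr : ∀ v ∈ H.verts, K.neighborSet v ⊆ H.neighborSet v) : H = K := by
  obtain ⟨u, hu⟩ := hne
  have hverts : K.verts ⊆ H.verts := by
    intro w hw
    obtain ⟨p⟩ := hK ⟨u, hHK.1 hu⟩ ⟨w, hw⟩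
    suffices ∀ {a b : K.verts}, K.coe.Walk a b → (a : V) ∈ H.verts → (b : V) ∈ H.verts from
      this p hu
    intro a b p ha
    induction p with
    | nil => exact ha
    | cons hadj _ ih => exact ih (H.edge_vert (hnbr _ ha hadj).symm)
  exact hHK.antisymm ⟨hverts, fun v w hvw => hnbr v (hverts (K.edge_vert hvw)) hvw⟩

lemma deleteVerts_eq_self_of_disjoint {S : Set V} (hHS : Disjoint H.verts S) :
    H.deleteVerts S = H := by
  rw [← SimpleGraph.Subgraph.deleteVerts_inter_verts_left_eq, hHS.inter_eq,
    SimpleGraph.Subgraph.deleteVerts_empty]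

lemma preconnected_coe_deleteVerts_cons_of_isCycle {v w : V} {h : G.Adj v w} {p : G.Walk w v}
    (hc : (p.cons h).IsCycle) : ((p.cons h).toSubgraph.deleteVerts {v}).coe.Preconnected := by
  obtain ⟨hpath, -⟩ := (SimpleGraph.Walk.cons_isCycle_iff p h).1 hc
  obtain ⟨z, q, hzv, rfl⟩ : ∃ (z : V) (q : G.Walk w z) (hzv : G.Adj z v), p = q.concat hzv :=
    ⟨_, _, _, (p.concat_dropLast (p.adj_penultimate fun hnil => h.ne hnil.eq.symm)).symm⟩
  have hvq : v ∉ q.support := ((q.concat_isPath_iff hzv).1 hpath).2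
  have hqc : q.toSubgraph ≤ ((q.concat hzv).cons h).toSubgraph := by
    rw [q.concat_eq_append, SimpleGraph.Walk.toSubgraph, SimpleGraph.Walk.toSubgraph_append]
    exact le_sup_left.trans le_sup_right
  have hle : q.toSubgraph ≤ ((q.concat hzv).cons h).toSubgraph.deleteVerts {v} := by
    rw [← deleteVerts_eq_self_of_disjoint (H := q.toSubgraph) (S := {v}) (by simpa using hvq)]
    exact SimpleGraph.Subgraph.deleteVerts_mono hqc
  have hverts :
      q.toSubgraph.verts = (((q.concat hzv).cons h).toSubgraph.deleteVerts {v}).verts := by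
    refine hle.1.antisymm fun u hu => ?_
    obtain ⟨hu, huv : u ≠ v⟩ := hu
    rw [SimpleGraph.Walk.mem_verts_toSubgraph, SimpleGraph.Walk.support_cons,
      SimpleGraph.Walk.support_concat] at hu
    simpa [huv] using hu
  exact (q.toSubgraph_connected.mono hle hverts).preconnected.coe

lemma noCutVertexSub_toSubgraph_of_isCycle {u : V} {c : G.Walk u u} (hc : c.IsCycle) :
    NoCutVertexSub G c.toSubgraph := by
  refine ⟨c.toSubgraph_connected, fun v => ?_⟩
  by_cases hv : v ∈ c.support
  · rw [← c.toSubgraph_rotate hv]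
    have hcv := (SimpleGraph.Walk.isCycle_rotate hv).2 hc
    generalize c.rotate v hv = c' at hcv
    cases c' with
    | nil => exact (hcv.ne_nil rfl).elim
    | cons => exact preconnected_coe_deleteVerts_cons_of_isCycle hcv
  · rw [deleteVerts_eq_self_of_disjoint (by simpa using hv)]
    exact c.toSubgraph_connected.preconnected.coe

end Subgraphs

section Cactus

lemma ncard_neighborSet_cycleGraph_le_two {n : ℕ} (v : Fin n) :
    ((SimpleGraph.cycleGraph n).neighborSet v).ncard ≤ 2 := by
  match n with
  | 0 => exact v.elim0
  | 1 => simp [SimpleGraph.cycleGraph_one_eq_bot]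
  | n + 2 =>
    rw [SimpleGraph.cycleGraph_neighborSet]
    exact (Set.ncard_insert_le _ _).trans_eq (by rw [Set.ncard_singleton])

variable {G : SimpleGraph V}

lemma IsEdgeBlock.ncard_neighborSet_le_two {B : G.Subgraph} (hB : IsEdgeBlock G B) (v : V) :
    (B.neighborSet v).ncard ≤ 2 := by
  obtain ⟨a, b, hab, rfl⟩ := hB
  calc ((G.subgraphOfAdj hab).neighborSet v).ncard
      ≤ ({a, b} : Set V).ncard :=
        Set.ncard_le_ncard ((G.subgraphOfAdj hab).neighborSet_subset_verts v) (Set.toFinite _)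
    _ = 2 := Set.ncard_pair hab.ne

lemma IsCycleBlock.ncard_neighborSet_le_two {B : G.Subgraph} (hB : IsCycleBlock G B) {v : V}
    (hv : v ∈ B.verts) : (B.neighborSet v).ncard ≤ 2 := by
  obtain ⟨n, -, ⟨φ⟩⟩ := hB
  calc (B.neighborSet v).ncard
      = ((SimpleGraph.cycleGraph n).neighborSet (φ ⟨v, hv⟩)).ncard :=
        Nat.card_congr ((SimpleGraph.Subgraph.coeNeighborSetEquiv ⟨v, hv⟩).symm.trans
          (φ.mapNeighborSet ⟨v, hv⟩))
    _ ≤ 2 := ncard_neighborSet_cycleGraph_le_two _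

/-- A block of a cactus has degrees at most two, so it cannot properly contain a cycle. -/
lemma IsCactus.isBlock_toSubgraph_of_isCycle [Finite V] (hG : IsCactus G) {u : V}
    {c : G.Walk u u} (hc : c.IsCycle) : IsBlock G c.toSubgraph := by
  obtain ⟨B, hB, hcB⟩ := (noCutVertexSub_toSubgraph_of_isCycle hc).exists_isBlock_ge
  suffices c.toSubgraph = B from this ▸ hB
  refine subgraph_eq_of_le_of_neighborSet_subset hcB c.toSubgraph_connected.nonempty
    hB.1.1.preconnected fun v hv => ?_
  have hdeg : (B.neighborSet v).ncard ≤ (c.toSubgraph.neighborSet v).ncard := by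
    rw [hc.ncard_neighborSet_toSubgraph_eq_two (c.mem_verts_toSubgraph.1 hv)]
    exact (hG.2 B hB).elim (·.ncard_neighborSet_le_two v) (·.ncard_neighborSet_le_two (hcB.1 hv))
  exact (Set.eq_of_subset_of_ncard_le
    (SimpleGraph.Subgraph.neighborSet_subset_of_subgraph hcB v) hdeg).ge

end Cactus

section CrossingEdges

variable {G : SimpleGraph V} {x y s t s' t' : V}

lemma dist_add_dist_of_mem_support {u v w : V} {p : G.Walk u v} (hp : p.length = G.dist u v)
    (hw : w ∈ p.support) : G.dist u w + G.dist w v = G.dist u v := by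
  rw [← SimpleGraph.length_eq_dist_of_subwalk hp (p.isSubwalk_takeUntil hw),
    ← SimpleGraph.length_eq_dist_of_subwalk hp (p.isSubwalk_dropUntil hw), ← hp,
    ← SimpleGraph.Walk.length_append, p.take_spec]

lemma dist_lt_dist_of_mem_support (hG : G.Connected) {u v z w : V} (hlt : G.dist u v < G.dist z v)
    {p : G.Walk u v} (hp : p.length = G.dist u v) (hw : w ∈ p.support) :
    G.dist u w < G.dist z w := by
  have hgeo := dist_add_dist_of_mem_support hp hw
  have htri := hG.dist_triangle (u := z) (v := w) (w := v)
  omega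

/-- `st` is an edge leading from the vertices closer to `x` than to `y` to those closer to `y`
than to `x`. In the bipartite case these are the `(x,y)`-distance-disparate edges, oriented. -/
structure IsCrossing (G : SimpleGraph V) (x y s t : V) : Prop where
  adj : G.Adj s t
  left : G.dist x s < G.dist y s
  right : G.dist y t < G.dist x t

namespace IsCrossing

lemma symm (h : IsCrossing G x y s t) : IsCrossing G y x t s :=
  ⟨h.adj.symm, h.right, h.left⟩

/-- The cycle runs from `x` to `s` and from `t` to `y` along geodesics. -/
lemma exists_isCycle (h : IsCrossing G x y s t) (hG : G.Connected) (hxy : G.Adj x y)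
    (hne : s(s, t) ≠ s(x, y)) :
    ∃ c : G.Walk y y, c.IsCycle ∧ x ∈ c.support ∧ s ∈ c.support ∧
      ∀ w ∈ c.support, G.dist x w < G.dist y w → G.dist x w + G.dist w s = G.dist x s := by
  obtain ⟨p, hp, hp_len⟩ := hG.exists_path_of_dist x s
  obtain ⟨q, hq, hq_len⟩ := hG.exists_path_of_dist y t
  have closer_left : ∀ w ∈ p.support, G.dist x w < G.dist y w := fun _ =>
    dist_lt_dist_of_mem_support hG h.left hp_len
  have closer_right : ∀ w ∈ q.support, G.dist y w < G.dist x w := fun _ =>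
    dist_lt_dist_of_mem_support hG h.right hq_len
  have y_notMem : y ∉ p.support := fun hy => by simpa using closer_left y hy
  have x_notMem : x ∉ q.support := fun hx => by simpa using closer_right x hx
  have hpath : (p.append (.cons h.adj q.reverse)).IsPath := by
    rw [SimpleGraph.Walk.isPath_def, SimpleGraph.Walk.support_append,
      SimpleGraph.Walk.support_cons, List.tail_cons, SimpleGraph.Walk.support_reverse]
    refine hp.support_nodup.append (List.nodup_reverse.2 hq.support_nodup) fun w hwp hwq => ?_
    exact lt_asymm (closer_left w hwp) (closer_right w (List.mem_reverse.1 hwq))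
  have hedge : s(y, x) ∉ (p.append (.cons h.adj q.reverse)).edges := by
    rw [SimpleGraph.Walk.edges_append, SimpleGraph.Walk.edges_cons,
      SimpleGraph.Walk.edges_reverse, List.mem_append, List.mem_cons, List.mem_reverse]
    rintro (hep | hst | heq)
    · exact y_notMem (p.fst_mem_support_of_mem_edges hep)
    · exact hne (hst.symm.trans Sym2.eq_swap)
    · exact x_notMem (q.snd_mem_support_of_mem_edges heq)
  refine ⟨.cons hxy.symm (p.append (.cons h.adj q.reverse)),
    (SimpleGraph.Walk.cons_isCycle_iff _ _).2 ⟨hpath, hedge⟩, by simp, by simp, ?_⟩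
  intro w hw hlt
  have hwq : w ∉ q.support := fun hwq => lt_asymm hlt (closer_right w hwq)
  have hwp : w ∈ p.support := by
    simp only [SimpleGraph.Walk.support_cons, SimpleGraph.Walk.mem_support_append_iff,
      SimpleGraph.Walk.support_reverse, List.mem_cons, List.mem_reverse] at hw
    rcases hw with rfl | hwp | rfl | hwq'
    · exact (hwq q.start_mem_support).elim
    · exact hwp
    · exact p.end_mem_support
    · exact (hwq hwq').elim
  exact dist_add_dist_of_mem_support hp_len hwp

lemma left_unique [Finite V] (h : IsCrossing G x y s t) (h' : IsCrossing G x y s' t')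
    (hG : IsCactus G) (hxy : G.Adj x y) (hne : s(s, t) ≠ s(x, y)) (hne' : s(s', t') ≠ s(x, y)) :
    s = s' := by
  obtain ⟨c, hc, hxc, hsc, hgeo⟩ := h.exists_isCycle hG.1 hxy hne
  obtain ⟨c', hc', hxc', hsc', hgeo'⟩ := h'.exists_isCycle hG.1 hxy hne'
  have hcc' : c.toSubgraph = c'.toSubgraph := by
    refine (hG.isBlock_toSubgraph_of_isCycle hc).eq_of_nontrivial_inf
      (hG.isBlock_toSubgraph_of_isCycle hc') ⟨x, ?_, y, ?_, hxy.ne⟩ <;> simp [*]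
  have hsupp : ∀ w, w ∈ c.support ↔ w ∈ c'.support := fun w => by
    rw [← c.mem_verts_toSubgraph, hcc', c'.mem_verts_toSubgraph]
  have hs' := hgeo s' ((hsupp s').2 hsc') h'.left
  have hs := hgeo' s ((hsupp s).1 hsc) h.left
  exact hG.1.dist_eq_zero_iff.1 (by omega)

lemma unique [Finite V] (h : IsCrossing G x y s t) (h' : IsCrossing G x y s' t')
    (hG : IsCactus G) (hxy : G.Adj x y) (hne : s(s, t) ≠ s(x, y)) (hne' : s(s', t') ≠ s(x, y)) :
    s(s, t) = s(s', t') := by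
  have hswap : ∀ {a b : V}, s(a, b) ≠ s(x, y) → s(b, a) ≠ s(y, x) := by simp [Sym2.eq_swap]
  rw [h.left_unique h' hG hxy hne hne',
    h.symm.left_unique h'.symm hG hxy.symm (hswap hne) (hswap hne')]

end IsCrossing

end CrossingEdges

section DisparateEdges

variable {G : SimpleGraph V}

lemma dist_ne_dist_of_adj_of_colorable_two (hG : G.Connected) (hbip : G.Colorable 2) {s t : V}
    (hst : G.Adj s t) (w : V) : G.dist w s ≠ G.dist w t := by
  obtain ⟨color⟩ := hbip
  let c : G.Coloring Bool := G.recolorOfEquiv finTwoEquiv color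
  obtain ⟨p, hp⟩ := hG.exists_walk_length_eq_dist w s
  obtain ⟨q, hq⟩ := hG.exists_walk_length_eq_dist w t
  intro heq
  have hparity : (c w ↔ c s) ↔ (c w ↔ c t) := by
    rw [← c.even_length_iff_congr p, ← c.even_length_iff_congr q, hp, hq, heq]
  exact c.valid hst (Bool.eq_iff_iff.2 (by tauto))

lemma IsDisparate.exists_isCrossing (hG : G.Connected) (hbip : G.Colorable 2) {x y : V}
    (hxy : G.Adj x y) {e : Sym2 V} (he : e ∈ G.edgeSet) (hdis : IsDisparate G x y e) :
    ∃ s t, e = s(s, t) ∧ IsCrossing G x y s t := by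
  have oriented : ∀ s t, G.Adj s t → G.dist x s < G.dist x t → G.dist y t < G.dist y s →
      IsCrossing G x y s t := by
    intro s t hst hs ht
    have hs_ne := dist_ne_dist_of_adj_of_colorable_two hG hbip hxy s
    have ht_ne := dist_ne_dist_of_adj_of_colorable_two hG hbip hxy t
    have hs_near := hxy.diff_dist_adj (u := s)
    have ht_near := hxy.diff_dist_adj (u := t)
    simp only [G.dist_comm (v := x), G.dist_comm (v := y)] at hs_ne ht_ne hs_near ht_near
    exact ⟨hst, by omega, by omega⟩
  induction e with | _ s t =>
  rcases hdis with ⟨hs, ht⟩ | ⟨ht, hs⟩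
  · exact ⟨s, t, rfl, oriented s t he hs ht⟩
  · exact ⟨t, s, Sym2.eq_swap, oriented t s (SimpleGraph.Adj.symm he) ht hs⟩

variable [Fintype V]

lemma disCount_self (u : V) : disCount G u u = 0 := by
  refine Finset.card_eq_zero.2 (Finset.filter_eq_empty_iff.2 fun e _ => ?_)
  induction e with | _ s t =>
  simp only [IsDisparate, Sym2.lift_mk]
  omega

lemma disCount_triangle (hG : G.Connected) (hbip : G.Colorable 2) (u v w : V) :
    disCount G u w ≤ disCount G u v + disCount G v w := by
  refine (Finset.card_le_card fun e he => ?_).trans (Finset.card_union_le _ _)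
  rw [← Finset.filter_or, Finset.mem_filter]
  rw [Finset.mem_filter] at he
  refine ⟨he.1, ?_⟩
  induction e with | _ s t =>
  have hst : G.Adj s t := SimpleGraph.mem_edgeFinset.1 he.1
  have hv := dist_ne_dist_of_adj_of_colorable_two hG hbip hst v
  have hdis := he.2
  simp only [IsDisparate, Sym2.lift_mk] at hdis ⊢
  omega

lemma disCount_le_mul_dist (hG : G.Connected) (hbip : G.Colorable 2) {k : ℕ}
    (hk : ∀ x y, G.Adj x y → disCount G x y ≤ k) (u v : V) :
    disCount G u v ≤ k * G.dist u v := by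
  obtain ⟨p, hp⟩ := hG.exists_walk_length_eq_dist u v
  rw [← hp]
  clear hp
  induction p with
  | nil => simp [disCount_self]
  | @cons u w v huw p ih =>
    calc disCount G u v ≤ disCount G u w + disCount G w v := disCount_triangle hG hbip u w v
      _ ≤ k + k * p.length := add_le_add (hk u w huw) ih
      _ = k * (p.cons huw).length := by rw [SimpleGraph.Walk.length_cons]; ring

lemma IsCactus.disCount_le_two_of_adj (hG : IsCactus G) (hbip : G.Colorable 2) {x y : V}
    (hxy : G.Adj x y) : disCount G x y ≤ 2 := by
  have others : ((G.edgeFinset.filter (IsDisparate G x y)).erase s(x, y)).card ≤ 1 := by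
    refine Finset.card_le_one.2 fun e he e' he' => ?_
    simp only [Finset.mem_erase, Finset.mem_filter, SimpleGraph.mem_edgeFinset] at he he'
    obtain ⟨hne, he, hdis⟩ := he
    obtain ⟨hne', he', hdis'⟩ := he'
    obtain ⟨s, t, rfl, hst⟩ := hdis.exists_isCrossing hG.1 hbip hxy he
    obtain ⟨s', t', rfl, hst'⟩ := hdis'.exists_isCrossing hG.1 hbip hxy he'
    exact hst.unique hst' hG hxy hne hne'
  exact Nat.sub_le_iff_le_add.1 (Finset.pred_card_le_card_erase.trans others)

end DisparateEdges

section Counting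

lemma sum_sym2_mk_eq_two_nsmul_sum {α M : Type*} [Fintype α] [AddCommMonoid M] (f : Sym2 α → M)
    (hf : ∀ a, f s(a, a) = 0) :
    ∑ z : α × α, f s(z.1, z.2) = 2 • ∑ e : Sym2 α, f e := by
  rw [Finset.smul_sum, ← Finset.sum_fiberwise (g := fun z : α × α => s(z.1, z.2))]
  refine Finset.sum_congr rfl fun e _ => ?_
  induction e with | _ a b =>
  have hfiber : (Finset.univ.filter fun z : α × α => s(z.1, z.2) = s(a, b)) =
      {(a, b), (b, a)} := by
    ext ⟨u, v⟩
    simp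
  rw [hfiber]
  obtain rfl | hab := eq_or_ne a b
  · simp [hf]
  · rw [Finset.sum_pair (by simp [hab]), Sym2.eq_swap (a := b), two_nsmul]

variable [Fintype V] {G : SimpleGraph V}

lemma sum_dist_eq_two_mul_wiener : ∑ z : V × V, G.dist z.1 z.2 = 2 * wiener G :=
  sum_sym2_mk_eq_two_nsmul_sum
    (Sym2.lift ⟨fun u v => G.dist u v, fun _ _ => G.dist_comm⟩) fun _ => G.dist_self

lemma card_isDisparate (s t : V) :
    (Finset.univ.filter fun z : V × V => IsDisparate G z.1 z.2 s(s, t)).card =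
      2 * (closerCount G s t * closerCount G t s) := by
  let S := Finset.univ.filter fun w => G.dist w s < G.dist w t
  let T := Finset.univ.filter fun w => G.dist w t < G.dist w s
  have hsplit : (Finset.univ.filter fun z : V × V => IsDisparate G z.1 z.2 s(s, t)) =
      S ×ˢ T ∪ T ×ˢ S := by
    ext z
    simp only [S, T, Finset.mem_filter, Finset.mem_univ, true_and, Finset.mem_union,
      Finset.mem_product]
    rfl
  have hST : Disjoint S T := Finset.disjoint_filter.2 fun _ _ => lt_asymm
  rw [hsplit, Finset.card_union_of_disjoint (Finset.disjoint_product.2 (.inl hST)),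
    Finset.card_product, Finset.card_product, mul_comm T.card, ← two_mul]
  rfl

lemma sum_disCount_eq_two_mul_szeged : ∑ z : V × V, disCount G z.1 z.2 = 2 * szeged G := by
  simp only [disCount, szeged, Finset.card_filter, Finset.mul_sum]
  rw [Finset.sum_comm]
  refine Finset.sum_congr rfl fun e _ => ?_
  induction e with | _ s t =>
  rw [← Finset.card_filter, card_isDisparate, Sym2.lift_mk]

lemma equidistCount_eq_zero (hG : G.Connected) (hbip : G.Colorable 2) {s t : V}
    (hst : G.Adj s t) : equidistCount G s t = 0 :=
  Finset.card_eq_zero.2 (Finset.filter_eq_empty_iff.2 fun w _ =>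
    dist_ne_dist_of_adj_of_colorable_two hG hbip hst w)

lemma revisedSzeged_eq_szeged (hG : G.Connected) (hbip : G.Colorable 2) :
    revisedSzeged G = szeged G := by
  rw [revisedSzeged, szeged, Nat.cast_sum]
  refine Finset.sum_congr rfl fun e he => ?_
  induction e with | _ s t =>
  have hst : G.Adj s t := SimpleGraph.mem_edgeFinset.1 he
  simp [equidistCount_eq_zero hG hbip hst, equidistCount_eq_zero hG hbip hst.symm]

end Counting

/-- **Theorem.** For a bipartite cactus graph `G`, `Sz*(G) ≤ 2·W(G)`. -/
theorem revisedSzeged_le_two_wiener [Fintype V] (G : SimpleGraph V) (hG : IsCactus G)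
    (hbip : G.Colorable 2) :
    revisedSzeged G ≤ 2 * (wiener G : ℚ) := by
  have hpairs : 2 * szeged G ≤ 2 * (2 * wiener G) :=
    calc 2 * szeged G = ∑ z : V × V, disCount G z.1 z.2 := sum_disCount_eq_two_mul_szeged.symm
      _ ≤ ∑ z : V × V, 2 * G.dist z.1 z.2 := Finset.sum_le_sum fun z _ =>
        disCount_le_mul_dist hG.1 hbip (fun _ _ => hG.disCount_le_two_of_adj hbip) z.1 z.2
      _ = 2 * (2 * wiener G) := by rw [← Finset.mul_sum, sum_dist_eq_two_mul_wiener]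
  rw [revisedSzeged_eq_szeged hG.1 hbip]
  exact_mod_cast Nat.le_of_mul_le_mul_left hpairs two_pos
end
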